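/- Let α ∈ (1,2), T > 0, L > 0, and let f : [0,T] × ℝ → ℝ be continuous with |f(t,x) − f(t,y)| ≤ L|x − y| for all t, x, y. Let y₁, y₂ : [0,T] → ℝ be continuous and satisfy yₖ(t) = y_{k,0} + y_{k,1} t + (1/Γ(α)) ∫₀ᵗ (t−s)^{α−1} f(s, yₖ(s)) ds for k = 1, 2, with y_{1,0} ≤ y_{2,0} and y_{1,1} ≤ y_{2,1}. Suppose T* ∈ (0,T] is such that E_{α,α}(−L t^α) > 0, E_{α,1}(−L t^α) > 0, and E_{α,2}(−L t^α) > 0 for all t ∈ [0,T*]. For t ∈ [0,T] define ã₋(t) := inf{ (f(τ, y + y₁(τ)) − f(τ, y₁(τ)))/y : τ ∈ [0,t], y ≠ 0 } and ã*(t) := sup{ (f(τ, y + y₁(τ)) − f(τ, y₁(τ)))/y : τ ∈ [0,t], y ≠ 0 }. Then for all t ∈ [0,T*]: (y_{2,0} − y_{1,0}) E_{α,1}(ã₋(t) t^α) + (y_{2,1} − y_{1,1}) t E_{α,2}(ã₋(t) t^α) ≤ y₂(t) − y₁(t) ≤ (y_{2,0} − y_{1,0}) E_{α,1}(ã*(t)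 t^α) + (y_{2,1} − y_{1,1}) t E_{α,2}(ã*(t) t^α). -/

import Mathlib

/-- The two-parameter Mittag-Leffler function `E_{α,β}(z) = ∑ₖ zᵏ / Γ(αk + β)`. -/
noncomputable def mlE (α β z : ℝ) : ℝ := ∑' k : ℕ, z ^ k / Real.Gamma (α * k + β)

/-!
The difference `U = y₂ - y₁` solves `U(t) = u₀ + u₁ t + I^α G(t)` with forcing
`G(s) = f(s, y₂(s)) - f(s, y₁(s))`. Convolution with `k_b(r) = r^{α-1} E_{α,α}(b r^α)` is the
series `∑ₖ bᵏ I^{αk+α}`, so applying it to this equation and using `I^β I^γ = I^{β+γ}` gives, for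
every real `b`, the variation-of-constants formula
`U(t) = u₀ E_{α,1}(b t^α) + u₁ t E_{α,2}(b t^α) + ∫₀ᵗ k_b(t-s) (G - bU)(s) ds`.
For `b = -L` the forcing satisfies `G + LU ≥ -L (|U| - U)`, and Grönwall's inequality for `|U| - U`
yields `U ≥ 0`. Then `ã₋ U ≤ G ≤ ã* U`, and the choices `b = ã₋` and `b = ã*` give the two bounds.

Nonnegativity of the kernels comes from that of `E_{α,1}(-L s^α)`: passing from `-L` to
`b ∈ [-L, 0]` amounts to rescaling `s`, the series has nonnegative terms for `b ≥ 0`, and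
`r^{γ-1} E_{α,γ}(b r^α)` is, for `γ > β`, a fractional integral of `r^{β-1} E_{α,β}(b r^α)`.
-/

open MeasureTheory Set

/-! ### Riemann–Liouville integrals -/

/-- The Riemann–Liouville fractional integral of order `γ > 0` with base point `0`. -/
noncomputable def fracInt (γ : ℝ) (h : ℝ → ℝ) (t : ℝ) : ℝ :=
  (1 / Real.Gamma γ) * ∫ s in (0 : ℝ)..t, (t - s) ^ (γ - 1) * h s

/-- The convolution kernel of `fracInt γ`, extended by `0` to negative arguments so that integrals
over triangles become integrals over squares. -/
noncomputable def fracKernel (γ x : ℝ) : ℝ :=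
  if 0 ≤ x then x ^ (γ - 1) / Real.Gamma γ else 0

section FractionalIntegral

variable {β γ c t : ℝ} {g h : ℝ → ℝ}

theorem integral_sub_rpow_mul_rpow (hβ : 0 < β) (hc : 0 < c) (ht : 0 < t) :
    ∫ s in (0 : ℝ)..t, (t - s) ^ (β - 1) * s ^ (c - 1) =
      t ^ (c + β - 1) * ProbabilityTheory.beta c β := by
  have hscaled := congrArg Complex.re (Complex.betaIntegral_scaled c β ht)
  have hpow : (t : ℂ) ^ ((c : ℂ) + β - 1) = ((t ^ (c + β - 1) : ℝ) : ℂ) := by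
    rw [Complex.ofReal_cpow ht.le]
    push_cast
    rfl
  have hint : ∫ s in (0 : ℝ)..t, (s : ℂ) ^ ((c : ℂ) - 1) * ((t : ℂ) - s) ^ ((β : ℂ) - 1) =
      ((∫ s in (0 : ℝ)..t, (t - s) ^ (β - 1) * s ^ (c - 1) : ℝ) : ℂ) := by
    rw [← intervalIntegral.integral_ofReal]
    refine intervalIntegral.integral_congr fun s hs => ?_
    rw [uIcc_of_le ht.le] at hs
    push_cast [Complex.ofReal_cpow (sub_nonneg.2 hs.2), Complex.ofReal_cpow hs.1]
    ring
  rwa [hint, hpow, Complex.ofReal_re, Complex.re_ofReal_mul,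
    ← ProbabilityTheory.beta_eq_betaIntegralReal c β hc hβ] at hscaled

theorem fracInt_rpow (hβ : 0 < β) (hc : 0 < c) (hβc : 1 < β + c) (ht : 0 ≤ t) :
    fracInt β (fun s => s ^ (c - 1)) t =
      Real.Gamma c / Real.Gamma (β + c) * t ^ (β + c - 1) := by
  rcases ht.eq_or_lt with rfl | ht
  · rw [fracInt, intervalIntegral.integral_same, Real.zero_rpow (by linarith), mul_zero, mul_zero]
  · have := (Real.Gamma_pos_of_pos hβ).ne'
    rw [fracInt, integral_sub_rpow_mul_rpow hβ hc ht, ProbabilityTheory.beta, add_comm c β]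
    field_simp

theorem intervalIntegrable_sub_rpow_mul (hγ : 1 ≤ γ) (hh : IntervalIntegrable h volume 0 t) :
    IntervalIntegrable (fun s => (t - s) ^ (γ - 1) * h s) volume 0 t := by
  have hcont : Continuous fun s : ℝ => (t - s) ^ (γ - 1) :=
    (continuous_const.sub continuous_id).rpow_const fun _ => .inr (by linarith)
  exact hh.continuousOn_mul hcont.continuousOn

theorem fracInt_sub (hγ : 1 ≤ γ) (hg : IntervalIntegrable g volume 0 t)
    (hh : IntervalIntegrable h volume 0 t) :
    fracInt γ (fun s => g s - h s) t = fracInt γ g t - fracInt γ h t := by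
  simp only [fracInt, mul_sub]
  rw [intervalIntegral.integral_sub (intervalIntegrable_sub_rpow_mul hγ hg)
    (intervalIntegrable_sub_rpow_mul hγ hh), mul_sub]

theorem fracInt_neg (γ t : ℝ) (h : ℝ → ℝ) : fracInt γ (fun s => -h s) t = -fracInt γ h t := by
  simp only [fracInt, mul_neg, intervalIntegral.integral_neg]

theorem measurable_fracKernel (γ : ℝ) : Measurable (fracKernel γ) :=
  Measurable.ite measurableSet_Ici ((measurable_id.pow_const _).div_const _) measurable_const

theorem norm_fracKernel_le {x : ℝ} (hγ : 1 ≤ γ) (hx : x ≤ t) :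
    ‖fracKernel γ x‖ ≤ |t| ^ (γ - 1) / Real.Gamma γ := by
  have : 0 < Real.Gamma γ := Real.Gamma_pos_of_pos (by linarith)
  unfold fracKernel
  split_ifs with hx0
  · rw [Real.norm_of_nonneg (by positivity)]
    gcongr
    exact hx.trans (le_abs_self t)
  · rw [norm_zero]
    positivity

theorem integral_fracKernel_mul {r : ℝ} (hr : r ∈ Icc 0 t) :
    ∫ s in (0 : ℝ)..t, fracKernel γ (r - s) * h s = fracInt γ h r := by
  have hind : (fun s => fracKernel γ (r - s) * h s) =
      {s | s ≤ r}.indicator fun s => 1 / Real.Gamma γ * ((r - s) ^ (γ - 1) * h s) := by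
    ext s
    simp only [fracKernel, indicator_apply, mem_ofPred_eq, sub_nonneg]
    split_ifs <;> ring
  rw [hind, intervalIntegral.integral_indicator hr, intervalIntegral.integral_const_mul, fracInt]

theorem integrable_fracKernel_sub_mul (hγ : 1 ≤ γ) (ht : 0 ≤ t)
    (hh : IntervalIntegrable h volume 0 t) :
    Integrable (fun p : ℝ × ℝ => fracKernel γ (p.1 - p.2) * h p.2)
      ((volume.restrict (Ioc 0 t)).prod (volume.restrict (Ioc 0 t))) := by
  rw [intervalIntegrable_iff_integrableOn_Ioc_of_le ht] at hh
  refine (hh.integrable.comp_snd _).bdd_mul (c := |t| ^ (γ - 1) / Real.Gamma γ)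
    ((measurable_fracKernel γ).comp (measurable_fst.sub measurable_snd)).aestronglyMeasurable ?_
  rw [Measure.prod_restrict]
  filter_upwards [ae_restrict_mem (measurableSet_Ioc.prod measurableSet_Ioc)] with p hp
  exact norm_fracKernel_le hγ (by linarith [hp.1.2, hp.2.1])

theorem intervalIntegrable_fracInt (hγ : 1 ≤ γ) (ht : 0 ≤ t)
    (hh : IntervalIntegrable h volume 0 t) : IntervalIntegrable (fracInt γ h) volume 0 t := by
  rw [intervalIntegrable_iff_integrableOn_Ioc_of_le ht]
  refine (integrable_fracKernel_sub_mul hγ ht hh).integral_prod_left.congr ?_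
  filter_upwards [ae_restrict_mem measurableSet_Ioc] with r hr
  rw [← intervalIntegral.integral_of_le ht, integral_fracKernel_mul (Ioc_subset_Icc_self hr)]

theorem integral_fracKernel_mul_fracKernel {s : ℝ} (hβ : 1 ≤ β) (hγ : 1 ≤ γ) (hs : s ∈ Icc 0 t) :
    ∫ r in (0 : ℝ)..t, fracKernel β (t - r) * fracKernel γ (r - s) =
      fracKernel (β + γ) (t - s) := by
  have := (Real.Gamma_pos_of_pos (by linarith : 0 < γ)).ne'
  have hts : 0 ≤ t - s := sub_nonneg.2 hs.2
  have hreflect : ∫ r in (0 : ℝ)..t, fracKernel β (t - r) * fracKernel γ (r - s) =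
      ∫ r in (0 : ℝ)..t, fracKernel γ (t - s - r) * fracKernel β r := by
    have h := intervalIntegral.integral_comp_sub_left (a := 0) (b := t)
      (fun r => fracKernel γ (t - s - r) * fracKernel β r) t
    rw [sub_self, sub_zero] at h
    rw [← h]
    congr 1 with r
    rw [mul_comm]
    congr 2
    ring
  have hrpow : fracInt γ (fracKernel β) (t - s) =
      fracInt γ (fun r => r ^ (β - 1)) (t - s) / Real.Gamma β := by
    rw [fracInt, fracInt, mul_div_assoc, ← intervalIntegral.integral_div]
    congr 1
    refine intervalIntegral.integral_congr fun r hr => ?_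
    rw [uIcc_of_le hts] at hr
    simp only [fracKernel, if_pos hr.1, mul_div_assoc]
  have := (Real.Gamma_pos_of_pos (by linarith : 0 < β)).ne'
  rw [hreflect, integral_fracKernel_mul ⟨hts, by linarith [hs.1]⟩, hrpow,
    fracInt_rpow (by linarith) (by linarith) (by linarith) hts, fracKernel, if_pos hts,
    add_comm γ β]
  field_simp

theorem fracInt_fracInt (hβ : 1 ≤ β) (hγ : 1 ≤ γ) (ht : 0 ≤ t)
    (hh : IntervalIntegrable h volume 0 t) :
    fracInt β (fracInt γ h) t = fracInt (β + γ) h t := by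
  have htt : t ∈ Icc 0 t := right_mem_Icc.2 ht
  have hint : IntegrableOn
      (Function.uncurry fun r s => fracKernel β (t - r) * (fracKernel γ (r - s) * h s))
      (uIoc 0 t ×ˢ uIoc 0 t) := by
    rw [uIoc_of_le ht, IntegrableOn, Measure.volume_eq_prod, ← Measure.prod_restrict]
    refine (integrable_fracKernel_sub_mul hγ ht hh).bdd_mul (c := |t| ^ (β - 1) / Real.Gamma β)
      ((measurable_fracKernel β).comp
        (measurable_const.sub measurable_fst)).aestronglyMeasurable ?_
    rw [Measure.prod_restrict]
    filter_upwards [ae_restrict_mem (measurableSet_Ioc.prod measurableSet_Ioc)] with p hp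
    exact norm_fracKernel_le hβ (by linarith [hp.1.1])
  calc fracInt β (fracInt γ h) t
      = ∫ r in (0 : ℝ)..t, ∫ s in (0 : ℝ)..t,
          fracKernel β (t - r) * (fracKernel γ (r - s) * h s) := by
        rw [← integral_fracKernel_mul htt]
        refine intervalIntegral.integral_congr fun r hr => ?_
        rw [uIcc_of_le ht] at hr
        simp only [intervalIntegral.integral_const_mul, integral_fracKernel_mul hr]
    _ = ∫ s in (0 : ℝ)..t, ∫ r in (0 : ℝ)..t,
          fracKernel β (t - r) * (fracKernel γ (r - s) * h s) :=
        intervalIntegral_intervalIntegral_swap hint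
    _ = ∫ s in (0 : ℝ)..t, fracKernel (β + γ) (t - s) * h s := by
        refine intervalIntegral.integral_congr fun s hs => ?_
        rw [uIcc_of_le ht] at hs
        simp only [← mul_assoc, intervalIntegral.integral_mul_const,
          integral_fracKernel_mul_fracKernel hβ hγ hs]
    _ = fracInt (β + γ) h t := integral_fracKernel_mul htt

end FractionalIntegral

/-! ### Mittag-Leffler functions -/

section MittagLeffler

variable {α β γ b c t : ℝ} {g h : ℝ → ℝ}

theorem summable_mlE (hα : 1 ≤ α) (hβ : 1 ≤ β) (z : ℝ) :
    Summable fun k : ℕ => z ^ k / Real.Gamma (α * k + β) := by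
  refine Summable.of_norm_bounded_eventually_nat
    (Real.summable_pow_div_factorial |z|) (Filter.eventually_atTop.2 ⟨1, fun k hk => ?_⟩)
  have hk1 : (1 : ℝ) ≤ k := by exact_mod_cast hk
  have hle : (k : ℝ) + 1 ≤ α * k + β := by nlinarith
  have hfactorial : (k.factorial : ℝ) ≤ Real.Gamma (α * k + β) := by
    rw [← Real.Gamma_nat_eq_factorial]
    exact Real.Gamma_strictMonoOn_Ici.monotoneOn (mem_Ici.2 (by linarith))
      (mem_Ici.2 (by linarith)) hle
  rw [norm_div, norm_pow, Real.norm_eq_abs, Real.norm_of_nonneg (k.factorial.cast_nonneg.trans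
    hfactorial)]
  gcongr

theorem hasSum_mlE (hα : 1 ≤ α) (hβ : 1 ≤ β) (z : ℝ) :
    HasSum (fun k : ℕ => z ^ k / Real.Gamma (α * k + β)) (mlE α β z) :=
  (summable_mlE hα hβ z).hasSum

theorem norm_pow_div_Gamma_le {z R : ℝ} (hα : 0 ≤ α) (hβ : 0 < β) (hz : |z| ≤ R) (k : ℕ) :
    ‖z ^ k / Real.Gamma (α * k + β)‖ ≤ R ^ k / Real.Gamma (α * k + β) := by
  have hΓ : 0 < Real.Gamma (α * k + β) := Real.Gamma_pos_of_pos (by positivity)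
  rw [norm_div, norm_pow, Real.norm_eq_abs, Real.norm_of_nonneg hΓ.le]
  gcongr

theorem continuous_mlE (hα : 1 ≤ α) (hβ : 1 ≤ β) : Continuous (mlE α β) := by
  refine continuous_iff_continuousAt.2 fun z => ?_
  have hball : ContinuousOn (mlE α β) (Icc (-(|z| + 1)) (|z| + 1)) :=
    continuousOn_tsum (fun k => by fun_prop) (summable_mlE hα hβ (|z| + 1)) fun k x hx =>
      norm_pow_div_Gamma_le (by linarith) (by linarith) (abs_le.2 hx) k
  exact hball.continuousAt
    (Icc_mem_nhds (by linarith [neg_abs_le z]) (by linarith [le_abs_self z]))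

theorem mlE_eq_inv_Gamma_add (hα : 1 ≤ α) (hβ : 1 ≤ β) (z : ℝ) :
    mlE α β z = 1 / Real.Gamma β + z * mlE α (α + β) z := by
  have hshift : HasSum (fun k : ℕ => z ^ (k + 1) / Real.Gamma (α * (k + 1 : ℕ) + β))
      (z * mlE α (α + β) z) := by
    refine ((hasSum_mlE hα (by linarith) z).mul_left z).congr_fun fun k => ?_
    rw [pow_succ', mul_div_assoc]
    congr 3
    push_cast
    ring
  simpa using (hasSum_mlE hα hβ z).unique hshift.zero_add

theorem mlE_nonneg (hα : 0 ≤ α) (hβ : 0 < β) {z : ℝ} (hz : 0 ≤ z) : 0 ≤ mlE α β z :=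
  tsum_nonneg fun k =>
    div_nonneg (pow_nonneg hz k) (Real.Gamma_nonneg_of_nonneg (by positivity))

theorem mlE_mul_rpow_nonneg_of_neg_le {L : ℝ} (hα : 0 < α) (hβ : 0 < β) (hb : -L ≤ b)
    (hL : ∀ s ∈ Icc 0 t, 0 ≤ mlE α β (-L * s ^ α)) {s : ℝ} (hs : s ∈ Icc 0 t) :
    0 ≤ mlE α β (b * s ^ α) := by
  rcases le_or_gt 0 b with hb0 | hb0
  · exact mlE_nonneg hα.le hβ (mul_nonneg hb0 (Real.rpow_nonneg hs.1 α))
  have hL0 : 0 < L := by linarith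
  have hq0 : 0 ≤ -b / L := div_nonneg (by linarith) hL0.le
  have hq1 : -b / L ≤ 1 := (div_le_one hL0).2 (by linarith)
  -- `b * s ^ α = -L * (c * s) ^ α` for the contraction factor `c = (-b / L) ^ (1 / α) ≤ 1`.
  have hc0 : 0 ≤ (-b / L) ^ α⁻¹ := Real.rpow_nonneg hq0 _
  have hc1 : (-b / L) ^ α⁻¹ ≤ 1 := Real.rpow_le_one hq0 hq1 (by positivity)
  have hmem : (-b / L) ^ α⁻¹ * s ∈ Icc 0 t :=
    ⟨mul_nonneg hc0 hs.1, (mul_le_of_le_one_left hs.1 hc1).trans hs.2⟩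
  have hscale : -L * ((-b / L) ^ α⁻¹ * s) ^ α = b * s ^ α := by
    rw [Real.mul_rpow hc0 hs.1, Real.rpow_inv_rpow hq0 hα.ne']
    field_simp
  exact hscale ▸ hL _ hmem

/-- The kernel `r^{β-1} E_{α,β}(b r^α)`, whose case `β = α` is the resolvent kernel of
`U = b I^α U + I^α H`. -/
noncomputable def mlKernel (α β b r : ℝ) : ℝ := r ^ (β - 1) * mlE α β (b * r ^ α)

/-- Convolution with `mlKernel α β b`; as a power series in `b` it is `∑ₖ bᵏ I^{αk+β}`. -/
noncomputable def mlInt (α β b : ℝ) (h : ℝ → ℝ) (t : ℝ) : ℝ :=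
  ∫ s in (0 : ℝ)..t, mlKernel α β b (t - s) * h s

theorem continuous_mlKernel (hα : 1 ≤ α) (hβ : 1 ≤ β) (b : ℝ) :
    Continuous (mlKernel α β b) := by
  have hpow {p : ℝ} (hp : 0 ≤ p) : Continuous fun r : ℝ => r ^ p :=
    continuous_id.rpow_const fun _ => .inr hp
  exact (hpow (by linarith)).mul
    ((continuous_mlE hα hβ).comp (continuous_const.mul (hpow (by linarith))))

theorem mlKernel_nonneg {r : ℝ} (hr : 0 ≤ r) (hE : 0 ≤ mlE α β (b * r ^ α)) :
    0 ≤ mlKernel α β b r :=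
  mul_nonneg (Real.rpow_nonneg hr _) hE

theorem intervalIntegrable_mlKernel_mul (hα : 1 ≤ α) (hβ : 1 ≤ β) (b : ℝ)
    (hh : IntervalIntegrable h volume 0 t) :
    IntervalIntegrable (fun s => mlKernel α β b (t - s) * h s) volume 0 t :=
  hh.continuousOn_mul
    ((continuous_mlKernel hα hβ b).comp (continuous_const.sub continuous_id)).continuousOn

theorem mlInt_add (hα : 1 ≤ α) (hβ : 1 ≤ β) (hg : IntervalIntegrable g volume 0 t)
    (hh : IntervalIntegrable h volume 0 t) :
    mlInt α β b (fun s => g s + h s) t = mlInt α β b g t + mlInt α β b h t := by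
  simp only [mlInt, mul_add]
  exact intervalIntegral.integral_add (intervalIntegrable_mlKernel_mul hα hβ b hg)
    (intervalIntegrable_mlKernel_mul hα hβ b hh)

theorem mlInt_const_mul (α β b c t : ℝ) (h : ℝ → ℝ) :
    mlInt α β b (fun s => c * h s) t = c * mlInt α β b h t := by
  simp only [mlInt, mul_left_comm _ c, intervalIntegral.integral_const_mul]

theorem mlInt_congr (ht : 0 ≤ t) (hgh : EqOn g h (Icc 0 t)) :
    mlInt α β b g t = mlInt α β b h t :=
  intervalIntegral.integral_congr fun s hs => by
    rw [uIcc_of_le ht] at hs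
    simp only [hgh hs]

theorem mlInt_nonneg (ht : 0 ≤ t) (hE : ∀ s ∈ Icc 0 t, 0 ≤ mlE α β (b * s ^ α))
    (hh : ∀ s ∈ Icc 0 t, 0 ≤ h s) : 0 ≤ mlInt α β b h t :=
  intervalIntegral.integral_nonneg ht fun s hs =>
    mul_nonneg (mlKernel_nonneg (sub_nonneg.2 hs.2)
      (hE _ ⟨sub_nonneg.2 hs.2, sub_le_self t hs.1⟩)) (hh s hs)

theorem neg_mul_integral_le_mlInt {M : ℝ} (hα : 1 ≤ α) (hβ : 1 ≤ β) (ht : 0 ≤ t)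
    (hE : ∀ s ∈ Icc 0 t, 0 ≤ mlE α β (b * s ^ α)) (hM : ∀ s ∈ Icc 0 t, mlKernel α β b s ≤ M)
    (hg : IntervalIntegrable g volume 0 t) (hh : IntervalIntegrable h volume 0 t)
    (hg0 : ∀ s ∈ Icc 0 t, 0 ≤ g s) (hgh : ∀ s ∈ Icc 0 t, -g s ≤ h s) :
    -(M * ∫ s in (0 : ℝ)..t, g s) ≤ mlInt α β b h t := by
  rw [← intervalIntegral.integral_const_mul, ← intervalIntegral.integral_neg]
  refine intervalIntegral.integral_mono_on ht (hg.const_mul M).neg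
    (intervalIntegrable_mlKernel_mul hα hβ b hh) fun s hs => ?_
  have hts : t - s ∈ Icc 0 t := ⟨sub_nonneg.2 hs.2, sub_le_self t hs.1⟩
  calc -(M * g s) ≤ -(mlKernel α β b (t - s) * g s) :=
        neg_le_neg (mul_le_mul_of_nonneg_right (hM _ hts) (hg0 s hs))
    _ = mlKernel α β b (t - s) * -g s := (mul_neg _ _).symm
    _ ≤ mlKernel α β b (t - s) * h s :=
        mul_le_mul_of_nonneg_left (hgh s hs) (mlKernel_nonneg hts.1 (hE _ hts))

theorem mul_rpow_pow_mul_rpow {r δ : ℝ} (hα : 0 ≤ α) (hδ : 0 ≤ δ) (hr : 0 ≤ r) (b : ℝ) (k : ℕ) :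
    (b * r ^ α) ^ k * r ^ δ = b ^ k * r ^ (α * k + δ) := by
  rw [Real.rpow_add_of_nonneg hr (by positivity) hδ, Real.rpow_mul_natCast hr, mul_pow, mul_assoc]

theorem pow_mul_fracInt_eq (hα : 0 ≤ α) (hβ : 1 ≤ β) (ht : 0 ≤ t) (b : ℝ) (h : ℝ → ℝ) (k : ℕ) :
    b ^ k * fracInt (α * k + β) h t = ∫ s in (0 : ℝ)..t,
      (t - s) ^ (β - 1) * ((b * (t - s) ^ α) ^ k / Real.Gamma (α * k + β)) * h s := by
  rw [fracInt, ← mul_assoc, ← intervalIntegral.integral_const_mul]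
  refine intervalIntegral.integral_congr fun s hs => ?_
  rw [uIcc_of_le ht] at hs
  have hpow := mul_rpow_pow_mul_rpow hα (sub_nonneg.2 hβ) (sub_nonneg.2 hs.2) b k
  rw [← add_sub_assoc] at hpow
  linear_combination (-1 / Real.Gamma (α * k + β) * h s) * hpow

theorem hasSum_mlInt (hα : 1 ≤ α) (hβ : 1 ≤ β) (b : ℝ) (ht : 0 ≤ t)
    (hh : IntervalIntegrable h volume 0 t) :
    HasSum (fun k : ℕ => b ^ k * fracInt (α * k + β) h t) (mlInt α β b h t) := by
  simp only [fun k => pow_mul_fracInt_eq (by linarith : 0 ≤ α) hβ ht b h k]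
  refine intervalIntegral.hasSum_integral_of_dominated_convergence
    (fun k s => t ^ (β - 1) * ((|b| * t ^ α) ^ k / Real.Gamma (α * k + β)) * ‖h s‖)
    (fun k => ?_) (fun k => .of_forall fun s hs => ?_) (.of_forall fun s _ => ?_) ?_
    (.of_forall fun s _ => ?_)
  · exact (Measurable.aestronglyMeasurable (by fun_prop)).mul hh.def'.aestronglyMeasurable
  · rw [uIoc_of_le ht] at hs
    have hts : 0 ≤ t - s := sub_nonneg.2 hs.2
    have htst : t - s ≤ t := sub_le_self t hs.1.le
    have hz : |b * (t - s) ^ α| ≤ |b| * t ^ α := by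
      rw [abs_mul, abs_of_nonneg (Real.rpow_nonneg hts α)]
      gcongr
    have hΓ := norm_pow_div_Gamma_le (by linarith : 0 ≤ α) (by linarith : 0 < β) hz k
    rw [norm_mul, norm_mul, Real.norm_of_nonneg (Real.rpow_nonneg hts _)]
    gcongr
  · exact ((summable_mlE hα hβ _).mul_left _).mul_right _
  · simp only [tsum_mul_right]
    exact hh.norm.const_mul _
  · exact ((hasSum_mlE hα hβ _).mul_left _).mul_right _

theorem mlInt_fracInt (hα : 1 ≤ α) (hβ : 1 ≤ β) (hγ : 1 ≤ γ) (ht : 0 ≤ t)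
    (hh : IntervalIntegrable h volume 0 t) :
    mlInt α β b (fracInt γ h) t = mlInt α (β + γ) b h t := by
  refine (hasSum_mlInt hα hβ b ht (intervalIntegrable_fracInt hγ ht hh)).unique
    ((hasSum_mlInt hα (by linarith) b ht hh).congr_fun fun k => ?_)
  rw [fracInt_fracInt (by nlinarith [k.cast_nonneg (α := ℝ)]) hγ ht hh, add_assoc]

theorem mlInt_eq_fracInt_add (hα : 1 ≤ α) (hβ : 1 ≤ β) (ht : 0 ≤ t)
    (hh : IntervalIntegrable h volume 0 t) :
    mlInt α β b h t = fracInt β h t + b * mlInt α (α + β) b h t := by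
  have hshift : HasSum (fun k : ℕ => b ^ (k + 1) * fracInt (α * (k + 1 : ℕ) + β) h t)
      (b * mlInt α (α + β) b h t) := by
    refine ((hasSum_mlInt hα (by linarith) b ht hh).mul_left b).congr_fun fun k => ?_
    rw [pow_succ', mul_assoc]
    congr 3
    push_cast
    ring
  simpa using (hasSum_mlInt hα hβ b ht hh).unique hshift.zero_add

theorem mlInt_rpow (hα : 1 ≤ α) (hβ : 1 ≤ β) (hc : 0 < c) (ht : 0 ≤ t) :
    mlInt α β b (fun s => s ^ (c - 1)) t =
      Real.Gamma c * (t ^ (β + c - 1) * mlE α (β + c) (b * t ^ α)) := by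
  refine (hasSum_mlInt hα hβ b ht
    (intervalIntegral.intervalIntegrable_rpow' (by linarith))).unique
    ((((hasSum_mlE hα (by linarith) _).mul_left _).mul_left _).congr_fun fun k => ?_)
  have hαk : 0 ≤ α * k := by positivity
  have hpow := mul_rpow_pow_mul_rpow (by linarith : 0 ≤ α) (by linarith : 0 ≤ β + c - 1) ht b k
  rw [fracInt_rpow (by linarith) hc (by linarith) ht,
    show α * k + β + c - 1 = α * k + (β + c - 1) by ring, ← add_assoc]
  linear_combination (-Real.Gamma c / Real.Gamma (α * k + β + c)) * hpow

theorem mlE_mul_rpow_nonneg_of_le (hα : 1 ≤ α) (hβ : 1 ≤ β) (hβγ : β ≤ γ)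
    (hE : ∀ s ∈ Icc 0 t, 0 ≤ mlE α β (b * s ^ α)) {s : ℝ} (hs : s ∈ Icc 0 t) :
    0 ≤ mlE α γ (b * s ^ α) := by
  rcases hβγ.eq_or_lt with rfl | hβγ
  · exact hE s hs
  rcases hs.1.eq_or_lt with rfl | hs0
  · rw [Real.zero_rpow (by linarith), mul_zero]
    exact mlE_nonneg (by linarith) (by linarith) le_rfl
  have hint : 0 ≤ mlInt α β b (fun r => r ^ (γ - β - 1)) s :=
    mlInt_nonneg hs.1 (fun r hr => hE r ⟨hr.1, hr.2.trans hs.2⟩)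
      fun r hr => Real.rpow_nonneg hr.1 _
  rw [mlInt_rpow hα hβ (sub_pos.2 hβγ) hs.1, add_sub_cancel] at hint
  have hΓ := Real.Gamma_pos_of_pos (sub_pos.2 hβγ)
  have hpow := Real.rpow_pos_of_pos hs0 (γ - 1)
  exact (mul_nonneg_iff_of_pos_left hpow).1 ((mul_nonneg_iff_of_pos_left hΓ).1 hint)

end MittagLeffler

/-! ### Variation of constants and comparison -/

theorem eq_zero_of_le_mul_integral {C T : ℝ} {v : ℝ → ℝ} (hv : ContinuousOn v (Icc 0 T))
    (hv0 : ∀ t ∈ Icc 0 T, 0 ≤ v t) (hle : ∀ t ∈ Icc 0 T, v t ≤ C * ∫ s in (0 : ℝ)..t, v s) {t : ℝ}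
    (ht : t ∈ Icc 0 T) : v t = 0 := by
  have hT : 0 ≤ T := ht.1.trans ht.2
  have hvint : IntervalIntegrable v volume 0 T := hv.intervalIntegrable_of_Icc hT
  have hderiv : ∀ x ∈ Ico 0 T,
      HasDerivWithinAt (fun t => ∫ s in (0 : ℝ)..t, v s) (v x) (Ici x) x := by
    intro x hx
    have hxT : Icc 0 T ∈ nhdsWithin x (Ioi x) :=
      Filter.mem_of_superset (Ioc_mem_nhdsGT hx.2) fun y hy => ⟨hx.1.trans hy.1.le, hy.2⟩
    refine intervalIntegral.integral_hasDerivWithinAt_right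
      (hvint.mono_set (uIcc_subset_uIcc_left (Icc_subset_uIcc (Ico_subset_Icc_self hx))))
      ⟨Icc 0 T, hxT, hv.aestronglyMeasurable measurableSet_Icc⟩
      ((hv x (Ico_subset_Icc_self hx)).mono_of_mem_nhdsWithin hxT)
  have hprimitive : ∀ x ∈ Icc 0 T, ∫ s in (0 : ℝ)..x, v s = 0 := by
    refine eq_zero_of_abs_deriv_le_mul_abs_self_of_eq_zero_right (K := C) ?_ hderiv
      intervalIntegral.integral_same fun x hx => ?_
    · rw [← uIcc_of_le hT]
      exact intervalIntegral.continuousOn_primitive_interval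
        ((uIcc_of_le hT).symm ▸ hv.integrableOn_Icc)
    · have hx' := Ico_subset_Icc_self hx
      rw [Real.norm_of_nonneg (hv0 x hx'), Real.norm_of_nonneg
        (intervalIntegral.integral_nonneg hx.1 fun s hs => hv0 s ⟨hs.1, hs.2.trans hx'.2⟩)]
      exact hle x hx'
  exact le_antisymm (by simpa only [hprimitive t ht, mul_zero] using hle t ht) (hv0 t ht)

/-- The problem `D^α U = G`, `U(0) = u₀`, `U'(0) = u₁` on `[0, T]` in its Volterra form. For a
nonlinear equation, `G` is the right-hand side already evaluated along `U`. -/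
def IsCaputoSolution (α u₀ u₁ T : ℝ) (G U : ℝ → ℝ) : Prop :=
  ∀ t ∈ Icc 0 T, U t = u₀ + u₁ * t + fracInt α G t

namespace IsCaputoSolution

variable {α a L T t u₀ u₁ v₀ v₁ : ℝ} {f : ℝ → ℝ → ℝ} {F G U V : ℝ → ℝ}

theorem mono (hU : IsCaputoSolution α u₀ u₁ T G U) (htT : t ≤ T) :
    IsCaputoSolution α u₀ u₁ t G U :=
  fun s hs => hU s ⟨hs.1, hs.2.trans htT⟩

theorem neg (hU : IsCaputoSolution α u₀ u₁ T G U) :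
    IsCaputoSolution α (-u₀) (-u₁) T (fun s => -G s) (fun s => -U s) := by
  intro t ht
  simp only [hU t ht, fracInt_neg]
  ring

theorem sub (hα : 1 ≤ α) (hF : IntervalIntegrable F volume 0 T)
    (hG : IntervalIntegrable G volume 0 T) (hU : IsCaputoSolution α u₀ u₁ T F U)
    (hV : IsCaputoSolution α v₀ v₁ T G V) :
    IsCaputoSolution α (u₀ - v₀) (u₁ - v₁) T (fun s => F s - G s) (fun s => U s - V s) := by
  intro t ht
  have hsub : uIcc 0 t ⊆ uIcc 0 T := uIcc_subset_uIcc_left (Icc_subset_uIcc ht)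
  simp only [hU t ht, hV t ht, fracInt_sub hα (hF.mono_set hsub) (hG.mono_set hsub)]
  ring

theorem intervalIntegrable (hα : 1 ≤ α) (ht : 0 ≤ t) (hG : IntervalIntegrable G volume 0 t)
    (hU : IsCaputoSolution α u₀ u₁ t G U) : IntervalIntegrable U volume 0 t := by
  have hlin : Continuous fun s : ℝ => u₀ + u₁ * s := by fun_prop
  refine ((hlin.intervalIntegrable 0 t).add (intervalIntegrable_fracInt hα ht hG)).congr
    fun s hs => ?_
  rw [uIoc_of_le ht] at hs
  exact (hU s (Ioc_subset_Icc_self hs)).symm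

theorem mlInt_self (hα : 1 ≤ α) (ht : 0 ≤ t) (hG : IntervalIntegrable G volume 0 t)
    (hU : IsCaputoSolution α u₀ u₁ t G U) (b : ℝ) :
    mlInt α α b U t = u₀ * (t ^ α * mlE α (α + 1) (b * t ^ α)) +
      u₁ * (t ^ (α + 1) * mlE α (α + 2) (b * t ^ α)) + mlInt α (α + α) b G t := by
  have hpow (c : ℝ) (hc : 1 ≤ c) (u : ℝ) :
      IntervalIntegrable (fun s : ℝ => u * s ^ (c - 1)) volume 0 t :=
    (intervalIntegral.intervalIntegrable_rpow' (by linarith)).const_mul u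
  have hexpand : EqOn U
      (fun s => u₀ * s ^ ((1 : ℝ) - 1) + u₁ * s ^ ((2 : ℝ) - 1) + fracInt α G s) (Icc 0 t) := by
    intro s hs
    norm_num [hU s hs]
  rw [mlInt_congr ht hexpand,
    mlInt_add hα hα ((hpow 1 le_rfl u₀).add (hpow 2 one_le_two u₁))
      (intervalIntegrable_fracInt hα ht hG),
    mlInt_add hα hα (hpow 1 le_rfl u₀) (hpow 2 one_le_two u₁), mlInt_const_mul, mlInt_const_mul,
    mlInt_rpow hα hα one_pos ht, mlInt_rpow hα hα two_pos ht, mlInt_fracInt hα hα hα ht hG,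
    Real.Gamma_one, Real.Gamma_two, one_mul, one_mul, add_sub_cancel_right,
    show α + 2 - 1 = α + 1 by ring]

theorem eq_mlE_add_mlInt (hα : 1 ≤ α) (ht : 0 ≤ t) (hG : IntervalIntegrable G volume 0 t)
    (hU : IsCaputoSolution α u₀ u₁ t G U) (b : ℝ) :
    U t = u₀ * mlE α 1 (b * t ^ α) + u₁ * (t * mlE α 2 (b * t ^ α)) +
      mlInt α α b (fun s => G s - b * U s) t := by
  have hUint := hU.intervalIntegrable hα ht hG
  have hsplit : mlInt α α b (fun s => G s - b * U s) t =
      mlInt α α b G t - b * mlInt α α b U t := by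
    simp only [sub_eq_add_neg, ← neg_mul]
    rw [mlInt_add hα hα hG (hUint.const_mul _), mlInt_const_mul]
  have hE₁ := mlE_eq_inv_Gamma_add hα le_rfl (b * t ^ α)
  have hE₂ := mlE_eq_inv_Gamma_add hα one_le_two (b * t ^ α)
  rw [Real.Gamma_one] at hE₁
  rw [Real.Gamma_two] at hE₂
  have hpow : t ^ (α + 1) = t ^ α * t := Real.rpow_add_one' ht (by linarith)
  rw [hsplit, hU.mlInt_self hα ht hG, mlInt_eq_fracInt_add hα hα ht hG, hpow]
  linear_combination hU t ⟨ht, le_rfl⟩ - u₀ * hE₁ - u₁ * t * hE₂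

theorem mlE_le_of_mul_le (hα : 1 ≤ α) (ht : 0 ≤ t) (hG : IntervalIntegrable G volume 0 t)
    (hU : IsCaputoSolution α u₀ u₁ t G U) (hE : ∀ s ∈ Icc 0 t, 0 ≤ mlE α α (a * s ^ α))
    (haU : ∀ s ∈ Icc 0 t, a * U s ≤ G s) :
    u₀ * mlE α 1 (a * t ^ α) + u₁ * (t * mlE α 2 (a * t ^ α)) ≤ U t := by
  rw [hU.eq_mlE_add_mlInt hα ht hG a]
  exact le_add_of_nonneg_right (mlInt_nonneg ht hE fun s hs => sub_nonneg.2 (haU s hs))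

theorem le_mlE_of_le_mul (hα : 1 ≤ α) (ht : 0 ≤ t) (hG : IntervalIntegrable G volume 0 t)
    (hU : IsCaputoSolution α u₀ u₁ t G U) (hE : ∀ s ∈ Icc 0 t, 0 ≤ mlE α α (a * s ^ α))
    (haU : ∀ s ∈ Icc 0 t, G s ≤ a * U s) :
    U t ≤ u₀ * mlE α 1 (a * t ^ α) + u₁ * (t * mlE α 2 (a * t ^ α)) := by
  have hneg := hU.neg.mlE_le_of_mul_le hα ht hG.neg hE fun s hs => by
    rw [mul_neg]
    exact neg_le_neg (haU s hs)
  linarith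

theorem neg_mul_integral_le {M : ℝ} (hα : 1 ≤ α) (ht : 0 ≤ t) (hu₀ : 0 ≤ u₀) (hu₁ : 0 ≤ u₁)
    (hG : IntervalIntegrable G volume 0 t) (hU : IsCaputoSolution α u₀ u₁ t G U)
    (hGU : ∀ s ∈ Icc 0 t, -(L * |U s|) ≤ G s) (hL : 0 ≤ L)
    (hE : ∀ s ∈ Icc 0 t, 0 ≤ mlE α 1 (-L * s ^ α))
    (hM : ∀ s ∈ Icc 0 t, mlKernel α α (-L) s ≤ M) :
    -(M * L * ∫ s in (0 : ℝ)..t, (|U s| - U s)) ≤ U t := by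
  have hEγ {γ : ℝ} (hγ : 1 ≤ γ) : ∀ s ∈ Icc 0 t, 0 ≤ mlE α γ (-L * s ^ α) :=
    fun s hs => mlE_mul_rpow_nonneg_of_le hα le_rfl hγ hE hs
  have hUint := hU.intervalIntegrable hα ht hG
  have hint : -(M * ∫ s in (0 : ℝ)..t, L * (|U s| - U s)) ≤
      mlInt α α (-L) (fun s => G s - -L * U s) t :=
    neg_mul_integral_le_mlInt hα hα ht (hEγ hα) hM ((hUint.abs.sub hUint).const_mul L)
      (hG.sub (hUint.const_mul (-L)))
      (fun s _ => mul_nonneg hL (sub_nonneg.2 (le_abs_self (U s))))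
      fun s hs => by linarith [hGU s hs]
  rw [intervalIntegral.integral_const_mul, ← mul_assoc] at hint
  have htt : t ∈ Icc 0 t := right_mem_Icc.2 ht
  have hinit₀ := mul_nonneg hu₀ (hEγ le_rfl t htt)
  have hinit₁ := mul_nonneg hu₁ (mul_nonneg ht (hEγ one_le_two t htt))
  linarith [hU.eq_mlE_add_mlInt hα ht hG (-L)]

theorem nonneg (hα : 1 ≤ α) (hu₀ : 0 ≤ u₀) (hu₁ : 0 ≤ u₁) (hUcont : ContinuousOn U (Icc 0 T))
    (hG : IntervalIntegrable G volume 0 T) (hU : IsCaputoSolution α u₀ u₁ T G U)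
    (hGU : ∀ s ∈ Icc 0 T, -(L * |U s|) ≤ G s) (hL : 0 ≤ L)
    (hE : ∀ s ∈ Icc 0 T, 0 ≤ mlE α 1 (-L * s ^ α)) (ht : t ∈ Icc 0 T) : 0 ≤ U t := by
  obtain ⟨M, hM⟩ := isCompact_Icc.exists_bound_of_continuousOn (s := Icc 0 T)
    (continuous_mlKernel hα hα (-L)).continuousOn
  have hM0 : 0 ≤ M := (norm_nonneg _).trans (hM t ht)
  have hgap0 : ∀ s ∈ Icc 0 T, 0 ≤ |U s| - U s := fun s _ => sub_nonneg.2 (le_abs_self (U s))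
  have hgap : ∀ r ∈ Icc 0 T, |U r| - U r ≤ 2 * (M * L) * ∫ s in (0 : ℝ)..r, (|U s| - U s) := by
    intro r hr
    have hsub : Icc 0 r ⊆ Icc 0 T := Icc_subset_Icc_right hr.2
    have hlower := (hU.mono hr.2).neg_mul_integral_le hα hr.1 hu₀ hu₁
      (hG.mono_set (uIcc_subset_uIcc_left (Icc_subset_uIcc hr))) (fun s hs => hGU s (hsub hs)) hL
      (fun s hs => hE s (hsub hs)) fun s hs => (Real.le_norm_self _).trans (hM s (hsub hs))
    have hpos : 0 ≤ M * L * ∫ s in (0 : ℝ)..r, (|U s| - U s) := mul_nonneg (mul_nonneg hM0 hL)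
      (intervalIntegral.integral_nonneg hr.1 fun s hs => hgap0 s (hsub hs))
    have habs : |U r| ≤ U r + 2 * (M * L * ∫ s in (0 : ℝ)..r, (|U s| - U s)) :=
      abs_le.2 ⟨by linarith, by linarith⟩
    linarith
  exact abs_eq_self.1 (sub_eq_zero.1
    (eq_zero_of_le_mul_integral (hUcont.abs.sub hUcont) hgap0 hgap ht))

theorem le_of_lipschitz (hα : 1 ≤ α)
    (hf : ∀ s ∈ Icc 0 T, ∀ x z, |f s x - f s z| ≤ L * |x - z|)
    (hUcont : ContinuousOn U (Icc 0 T)) (hVcont : ContinuousOn V (Icc 0 T))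
    (hfU : IntervalIntegrable (fun s => f s (U s)) volume 0 T)
    (hfV : IntervalIntegrable (fun s => f s (V s)) volume 0 T)
    (hU : IsCaputoSolution α u₀ u₁ T (fun s => f s (U s)) U)
    (hV : IsCaputoSolution α v₀ v₁ T (fun s => f s (V s)) V) (h₀ : u₀ ≤ v₀) (h₁ : u₁ ≤ v₁)
    (hE : ∀ s ∈ Icc 0 T, 0 ≤ mlE α 1 (-L * s ^ α)) (ht : t ∈ Icc 0 T) : U t ≤ V t := by
  have hL : 0 ≤ L := by
    simpa only [sub_zero, abs_one, mul_one] using (abs_nonneg _).trans (hf t ht 1 0)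
  have hdiff := (hV.sub hα hfV hfU hU).nonneg hα (sub_nonneg.2 h₀) (sub_nonneg.2 h₁)
    (hVcont.sub hUcont) (hfV.sub hfU) (fun s hs => (abs_le.1 (hf s hs (V s) (U s))).1) hL hE ht
  exact sub_nonneg.1 hdiff

end IsCaputoSolution

/-! ### Separation of solutions -/

/-- The difference quotients of `f τ` based at `y τ`, for `τ ∈ [0, t]`; for `y = y₁` its infimum
and supremum are the rates `ã₋(t)` and `ã*(t)`. -/
def incrementQuotients (f : ℝ → ℝ → ℝ) (y : ℝ → ℝ) (t : ℝ) : Set ℝ :=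
  {r | ∃ τ ∈ Icc 0 t, ∃ x, x ≠ 0 ∧ r = (f τ (x + y τ) - f τ (y τ)) / x}

section Separation

variable {L T s t z : ℝ} {f : ℝ → ℝ → ℝ} {y : ℝ → ℝ}

theorem incrementQuotients_nonempty (f : ℝ → ℝ → ℝ) (y : ℝ → ℝ) (ht : 0 ≤ t) :
    (incrementQuotients f y t).Nonempty :=
  ⟨_, 0, left_mem_Icc.2 ht, 1, one_ne_zero, rfl⟩

theorem incrementQuotients_subset_Icc
    (hf : ∀ s ∈ Icc 0 t, ∀ x z, |f s x - f s z| ≤ L * |x - z|) :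
    incrementQuotients f y t ⊆ Icc (-L) L := by
  rintro _ ⟨τ, hτ, x, hx, rfl⟩
  have hlip := hf τ hτ (x + y τ) (y τ)
  rw [add_sub_cancel_right] at hlip
  rw [mem_Icc, ← abs_le, abs_div]
  exact (div_le_iff₀ (abs_pos.2 hx)).2 hlip

theorem slope_mem_incrementQuotients (hs : s ∈ Icc 0 t) (hz : z ≠ y s) :
    (f s z - f s (y s)) / (z - y s) ∈ incrementQuotients f y t :=
  ⟨s, hs, z - y s, sub_ne_zero.2 hz, by rw [sub_add_cancel]⟩

theorem sInf_incrementQuotients_mul_le (hbdd : BddBelow (incrementQuotients f y t))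
    (hs : s ∈ Icc 0 t) (hz : y s ≤ z) :
    sInf (incrementQuotients f y t) * (z - y s) ≤ f s z - f s (y s) := by
  rcases hz.eq_or_lt with rfl | hz
  · simp only [sub_self, mul_zero, le_refl]
  · exact (le_div_iff₀ (sub_pos.2 hz)).1 (csInf_le hbdd (slope_mem_incrementQuotients hs hz.ne'))

theorem le_sSup_incrementQuotients_mul (hbdd : BddAbove (incrementQuotients f y t))
    (hs : s ∈ Icc 0 t) (hz : y s ≤ z) :
    f s z - f s (y s) ≤ sSup (incrementQuotients f y t) * (z - y s) := by
  rcases hz.eq_or_lt with rfl | hz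
  · simp only [sub_self, mul_zero, le_refl]
  · exact (div_le_iff₀ (sub_pos.2 hz)).1 (le_csSup hbdd (slope_mem_incrementQuotients hs hz.ne'))

theorem intervalIntegrable_comp_graph (hT : 0 ≤ T)
    (hf : ContinuousOn (fun p : ℝ × ℝ => f p.1 p.2) (Icc 0 T ×ˢ univ))
    (hy : ContinuousOn y (Icc 0 T)) : IntervalIntegrable (fun s => f s (y s)) volume 0 T :=
  ContinuousOn.intervalIntegrable_of_Icc hT
    (hf.comp (continuousOn_id.prodMk hy) fun _ hs => ⟨hs, mem_univ _⟩)

end Separation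

theorem nonlinear_separation_bounds_general {α t L y₁₀ y₁₁ y₂₀ y₂₁ : ℝ} {f : ℝ → ℝ → ℝ}
    {y₁ y₂ : ℝ → ℝ} (hα : 1 ≤ α) (ht : 0 ≤ t)
    (hf_cont : ContinuousOn (fun p : ℝ × ℝ => f p.1 p.2) (Icc 0 t ×ˢ univ))
    (hf_lip : ∀ s ∈ Icc 0 t, ∀ x z, |f s x - f s z| ≤ L * |x - z|)
    (hy₁cont : ContinuousOn y₁ (Icc 0 t)) (hy₂cont : ContinuousOn y₂ (Icc 0 t))
    (hy₁ : IsCaputoSolution α y₁₀ y₁₁ t (fun s => f s (y₁ s)) y₁)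
    (hy₂ : IsCaputoSolution α y₂₀ y₂₁ t (fun s => f s (y₂ s)) y₂)
    (h0 : y₁₀ ≤ y₂₀) (h1 : y₁₁ ≤ y₂₁) (hE : ∀ s ∈ Icc 0 t, 0 ≤ mlE α 1 (-L * s ^ α)) :
    (y₂₀ - y₁₀) * mlE α 1 (sInf (incrementQuotients f y₁ t) * t ^ α) +
        (y₂₁ - y₁₁) * (t * mlE α 2 (sInf (incrementQuotients f y₁ t) * t ^ α)) ≤ y₂ t - y₁ t ∧
      y₂ t - y₁ t ≤ (y₂₀ - y₁₀) * mlE α 1 (sSup (incrementQuotients f y₁ t) * t ^ α) +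
        (y₂₁ - y₁₁) * (t * mlE α 2 (sSup (incrementQuotients f y₁ t) * t ^ α)) := by
  have hf₁ := intervalIntegrable_comp_graph ht hf_cont hy₁cont
  have hf₂ := intervalIntegrable_comp_graph ht hf_cont hy₂cont
  have hdiff := hy₂.sub hα hf₂ hf₁ hy₁
  have hle : ∀ s ∈ Icc 0 t, y₁ s ≤ y₂ s := fun s hs =>
    hy₁.le_of_lipschitz hα hf_lip hy₁cont hy₂cont hf₁ hf₂ hy₂ h0 h1 hE hs
  have hmem : incrementQuotients f y₁ t ⊆ Icc (-L) L := incrementQuotients_subset_Icc hf_lip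
  have hne := incrementQuotients_nonempty f y₁ ht
  have hbelow : BddBelow (incrementQuotients f y₁ t) := bddBelow_Icc.mono hmem
  have habove : BddAbove (incrementQuotients f y₁ t) := bddAbove_Icc.mono hmem
  have hEα {a : ℝ} (ha : -L ≤ a) : ∀ s ∈ Icc 0 t, 0 ≤ mlE α α (a * s ^ α) := fun s hs =>
    mlE_mul_rpow_nonneg_of_neg_le (by linarith) (by linarith) ha
      (fun r hr => mlE_mul_rpow_nonneg_of_le hα le_rfl hα hE hr) hs
  constructor
  · exact hdiff.mlE_le_of_mul_le hα ht (hf₂.sub hf₁) (hEα (le_csInf hne fun r hr => (hmem hr).1))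
      fun s hs => sInf_incrementQuotients_mul_le hbelow hs (hle s hs)
  · obtain ⟨r, hr⟩ := hne
    exact hdiff.le_mlE_of_le_mul hα ht (hf₂.sub hf₁)
      (hEα ((hmem hr).1.trans (le_csSup habove hr)))
      fun s hs => le_sSup_incrementQuotients_mul habove hs (hle s hs)

/-- Separation bounds in the general nonlinear case (Theorem 2.12 of the paper). -/
theorem nonlinear_separation_bounds
    (α T Tstar L y₁₀ y₁₁ y₂₀ y₂₁ : ℝ) (hα₁ : 1 < α) (hα₂ : α < 2)
    (hT : 0 < T) (hL : 0 < L)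
    (f : ℝ → ℝ → ℝ)
    (hf_cont : ContinuousOn (fun p : ℝ × ℝ => f p.1 p.2) (Set.Icc 0 T ×ˢ Set.univ))
    (hf_lip : ∀ t ∈ Set.Icc (0 : ℝ) T, ∀ x z : ℝ, |f t x - f t z| ≤ L * |x - z|)
    (y₁ y₂ : ℝ → ℝ)
    (hy₁cont : ContinuousOn y₁ (Set.Icc 0 T)) (hy₂cont : ContinuousOn y₂ (Set.Icc 0 T))
    (hy₁ : ∀ t ∈ Set.Icc (0 : ℝ) T,
      y₁ t = y₁₀ + y₁₁ * t
        + (1 / Real.Gamma α) * ∫ s in (0 : ℝ)..t, (t - s) ^ (α - 1) * f s (y₁ s))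
    (hy₂ : ∀ t ∈ Set.Icc (0 : ℝ) T,
      y₂ t = y₂₀ + y₂₁ * t
        + (1 / Real.Gamma α) * ∫ s in (0 : ℝ)..t, (t - s) ^ (α - 1) * f s (y₂ s))
    (h0 : y₁₀ ≤ y₂₀) (h1 : y₁₁ ≤ y₂₁)
    (hTstar : 0 < Tstar) (hTstarT : Tstar ≤ T)
    (hposαα : ∀ t ∈ Set.Icc (0 : ℝ) Tstar, mlE α α (-(L * t ^ α)) > 0)
    (hposα1 : ∀ t ∈ Set.Icc (0 : ℝ) Tstar, mlE α 1 (-(L * t ^ α)) > 0)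
    (hposα2 : ∀ t ∈ Set.Icc (0 : ℝ) Tstar, mlE α 2 (-(L * t ^ α)) > 0)
    (alow astar : ℝ → ℝ)
    (halow : ∀ t ∈ Set.Icc (0 : ℝ) T,
      alow t = sInf {r : ℝ | ∃ τ ∈ Set.Icc (0 : ℝ) t, ∃ x : ℝ, x ≠ 0 ∧
        r = (f τ (x + y₁ τ) - f τ (y₁ τ)) / x})
    (hastar : ∀ t ∈ Set.Icc (0 : ℝ) T,
      astar t = sSup {r : ℝ | ∃ τ ∈ Set.Icc (0 : ℝ) t, ∃ x : ℝ, x ≠ 0 ∧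
        r = (f τ (x + y₁ τ) - f τ (y₁ τ)) / x}) :
    ∀ t ∈ Set.Icc (0 : ℝ) Tstar,
      (y₂₀ - y₁₀) * mlE α 1 (alow t * t ^ α)
          + (y₂₁ - y₁₁) * (t * mlE α 2 (alow t * t ^ α)) ≤ y₂ t - y₁ t ∧
        y₂ t - y₁ t ≤ (y₂₀ - y₁₀) * mlE α 1 (astar t * t ^ α)
          + (y₂₁ - y₁₁) * (t * mlE α 2 (astar t * t ^ α)) := by
  intro t ht
  have htT : t ≤ T := ht.2.trans hTstarT
  have hsub : Icc 0 t ⊆ Icc 0 T := Icc_subset_Icc_right htT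
  rw [halow t ⟨ht.1, htT⟩, hastar t ⟨ht.1, htT⟩]
  exact nonlinear_separation_bounds_general hα₁.le ht.1
    (hf_cont.mono (prod_mono_left hsub)) (fun s hs => hf_lip s (hsub hs))
    (hy₁cont.mono hsub) (hy₂cont.mono hsub) (fun s hs => hy₁ s (hsub hs))
    (fun s hs => hy₂ s (hsub hs)) h0 h1
    fun s hs => by simpa only [neg_mul] using (hposα1 s ⟨hs.1, hs.2.trans ht.2⟩).le
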